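/- (Trend to equilibrium, spatially homogeneous case.) Let F : [0,∞) → ℝ^N be differentiable and bounded, solving F′(t) = Q^α(F(t)) for all t > 0, and assume there exist η > 0 and t_0 ≥ 0 such that η ≤ F_i(t) ≤ 1/α − η for all i ∈ {1,…,N} and all t ≥ t_0. Assume the model is normal. Then F(t) converges as t → ∞ to an equilibrium distribution P, and P is the unique equilibrium distribution with the same moments as F, i.e., ⟨1,P⟩ = ⟨1,F(t)⟩, ⟨p^i,P⟩ = ⟨p^i,F(t)⟩ for i = 1,…,d, and ⟨|p|²,P⟩ = ⟨|p|²,F(t)⟩ (these moments of F are independent of t). -/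

import Mathlib

open Real Finset Filter Set

noncomputable def Psi (α y : ℝ) : ℝ :=
  (1 - α * y) ^ α * (1 + (1 - α) * y) ^ (1 - α)

noncomputable def Qop {N : ℕ} (α : ℝ) (Γ : Fin N → Fin N → Fin N → Fin N → ℝ)
    (F : Fin N → ℝ) : Fin N → ℝ := fun i =>
  ∑ j, ∑ k, ∑ l, Γ i j k l *
    (F k * F l * Psi α (F i) * Psi α (F j) - F i * F j * Psi α (F k) * Psi α (F l))

def dotN {N : ℕ} (u v : Fin N → ℝ) : ℝ := ∑ i, u i * v i

def GammaOK {N d : ℕ} (p : Fin N → Fin d → ℝ)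
    (Γ : Fin N → Fin N → Fin N → Fin N → ℝ) : Prop :=
  (∀ i j k l, 0 ≤ Γ i j k l) ∧
  (∀ i j k l, Γ i j k l = Γ j i k l) ∧
  (∀ i j k l, Γ i j k l = Γ k l i j) ∧
  (∀ i j k l, Γ i j k l ≠ 0 →
    (∀ m, p i m + p j m = p k m + p l m) ∧
    (∑ m, (p i m) ^ 2) + (∑ m, (p j m) ^ 2) = (∑ m, (p k m) ^ 2) + (∑ m, (p l m) ^ 2))

def IsCollInv {N : ℕ} (Γ : Fin N → Fin N → Fin N → Fin N → ℝ) (φ : Fin N → ℝ) : Prop :=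
  ∀ i j k l, Γ i j k l ≠ 0 → φ i + φ j = φ k + φ l

def IsNormal {N d : ℕ} (p : Fin N → Fin d → ℝ)
    (Γ : Fin N → Fin N → Fin N → Fin N → ℝ) : Prop :=
  ∀ φ : Fin N → ℝ, IsCollInv Γ φ →
    ∃ (a c : ℝ) (b : Fin d → ℝ), ∀ i, φ i = a + (∑ m, b m * p i m) + c * ∑ m, (p i m) ^ 2

def IsEquilib {N d : ℕ} (α : ℝ) (p : Fin N → Fin d → ℝ) (P : Fin N → ℝ) : Prop :=
  (∀ i, 0 < P i ∧ P i < 1 / α) ∧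
  ∃ (K : ℝ) (b : Fin d → ℝ) (c : ℝ), 0 < K ∧
    ∀ i, P i / Psi α (P i) = K * Real.exp (-(∑ m, b m * p i m) - c * ∑ m, (p i m) ^ 2)

noncomputable def muF (α y : ℝ) : ℝ :=
  y * Real.log y + (1 - α * y) * Real.log (1 - α * y)
    - (1 + (1 - α) * y) * Real.log (1 + (1 - α) * y)

noncomputable def Rfun {N : ℕ} (α : ℝ) (P : Fin N → ℝ) (i : Fin N) : ℝ :=
  P i * (1 - α * P i) * (1 + (1 - α) * P i)

noncomputable def Pcoef {N : ℕ} (α : ℝ) (P : Fin N → ℝ) (i j k l : Fin N) : ℝ :=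
  P i * P j * Psi α (P k) * Psi α (P l) / Real.sqrt (Rfun α P i)

noncomputable def Lop {N : ℕ} (α : ℝ) (Γ : Fin N → Fin N → Fin N → Fin N → ℝ)
    (P : Fin N → ℝ) (f : Fin N → ℝ) : Fin N → ℝ := fun i =>
  ∑ j, ∑ k, ∑ l, Γ i j k l / Real.sqrt (Rfun α P i) *
    (Pcoef α P i j k l * f i + Pcoef α P j i k l * f j
      - Pcoef α P k l i j * f k - Pcoef α P l k i j * f l)

/-- The derivative of `muF α`, equal to `log (y / Psi α y)` on `(0, 1/α)`. -/
noncomputable def chemPot (α y : ℝ) : ℝ :=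
  Real.log y - α * Real.log (1 - α * y) - (1 - α) * Real.log (1 + (1 - α) * y)

lemma one_sub_mul_pos {α y : ℝ} (hα0 : 0 < α) (hy : y ∈ Set.Ioo 0 (1 / α)) :
    0 < 1 - α * y := by
  have := (lt_div_iff₀ hα0).1 hy.2
  linarith

lemma one_add_mul_pos {α y : ℝ} (hα1 : α < 1) (hy : 0 < y) : 0 < 1 + (1 - α) * y := by
  have := mul_pos (sub_pos.2 hα1) hy
  linarith

lemma Psi_pos {α y : ℝ} (hα0 : 0 < α) (hα1 : α < 1) (hy : y ∈ Set.Ioo 0 (1 / α)) :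
    0 < Psi α y :=
  mul_pos (Real.rpow_pos_of_pos (one_sub_mul_pos hα0 hy) _)
    (Real.rpow_pos_of_pos (one_add_mul_pos hα1 hy.1) _)

lemma continuous_Psi {α : ℝ} (hα0 : 0 < α) (hα1 : α < 1) : Continuous (Psi α) := by
  unfold Psi
  exact ((by fun_prop : Continuous fun y : ℝ => 1 - α * y).rpow_const
      fun _ => Or.inr hα0.le).mul
    ((by fun_prop : Continuous fun y : ℝ => 1 + (1 - α) * y).rpow_const
      fun _ => Or.inr (sub_pos.2 hα1).le)

lemma exp_chemPot {α y : ℝ} (hα0 : 0 < α) (hα1 : α < 1) (hy : y ∈ Set.Ioo 0 (1 / α)) :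
    Real.exp (chemPot α y) = y / Psi α y := by
  have h1 := one_sub_mul_pos hα0 hy
  have h2 := one_add_mul_pos hα1 hy.1
  rw [chemPot, Psi, Real.exp_sub, Real.exp_sub, Real.exp_log hy.1,
    Real.rpow_def_of_pos h1, Real.rpow_def_of_pos h2, div_div, mul_comm α (Real.log _),
    mul_comm (1 - α) (Real.log _)]

lemma hasDerivAt_muF {α y : ℝ} (hα0 : 0 < α) (hα1 : α < 1) (hy : y ∈ Set.Ioo 0 (1 / α)) :
    HasDerivAt (muF α) (chemPot α y) y := by
  have h1 := one_sub_mul_pos hα0 hy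
  have h2 := one_add_mul_pos hα1 hy.1
  have d1 : HasDerivAt (fun y : ℝ => 1 - α * y) (-α) y := by
    simpa using ((hasDerivAt_id y).const_mul α).const_sub 1
  have d2 : HasDerivAt (fun y : ℝ => 1 + (1 - α) * y) (1 - α) y := by
    simpa using ((hasDerivAt_id y).const_mul (1 - α)).const_add 1
  refine (((hasDerivAt_id' y).fun_mul ((hasDerivAt_id' y).log hy.1.ne')).fun_add
    (d1.fun_mul (d1.log h1.ne')) |>.fun_sub (d2.fun_mul (d2.log h2.ne'))).congr_deriv ?_
  simp only [chemPot, mul_div_assoc', mul_div_cancel_left₀ _ h1.ne',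
    mul_div_cancel_left₀ _ h2.ne', mul_one, div_self hy.1.ne']
  ring

lemma hasDerivAt_chemPot {α y : ℝ} (hα0 : 0 < α) (hα1 : α < 1)
    (hy : y ∈ Set.Ioo 0 (1 / α)) :
    HasDerivAt (chemPot α) (1 / (y * (1 - α * y) * (1 + (1 - α) * y))) y := by
  have h1 := one_sub_mul_pos hα0 hy
  have h2 := one_add_mul_pos hα1 hy.1
  have d1 : HasDerivAt (fun y : ℝ => 1 - α * y) (-α) y := by
    simpa using ((hasDerivAt_id y).const_mul α).const_sub 1
  have d2 : HasDerivAt (fun y : ℝ => 1 + (1 - α) * y) (1 - α) y := by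
    simpa using ((hasDerivAt_id y).const_mul (1 - α)).const_add 1
  refine (((hasDerivAt_id' y).log hy.1.ne').fun_sub ((d1.log h1.ne').const_mul α) |>.fun_sub
    ((d2.log h2.ne').const_mul (1 - α))).congr_deriv ?_
  obtain ⟨u, hu⟩ : ∃ u, u = 1 - α * y := ⟨_, rfl⟩
  obtain ⟨v, hv⟩ : ∃ v, v = 1 + (1 - α) * y := ⟨_, rfl⟩
  rw [← hu] at h1 ⊢
  rw [← hv] at h2 ⊢
  have := hy.1.ne'
  field_simp
  rw [hu, hv]
  ring

lemma sq_le_deriv_chemPot {α y : ℝ} (hα0 : 0 < α) (hα1 : α < 1)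
    (hy : y ∈ Set.Ioo 0 (1 / α)) :
    α ^ 2 ≤ 1 / (y * (1 - α * y) * (1 + (1 - α) * y)) := by
  have h1 := one_sub_mul_pos hα0 hy
  have h2 := one_add_mul_pos hα1 hy.1
  have hp := mul_pos (mul_pos hy.1 h1) h2
  rw [le_div_iff₀ hp]
  have h3 : 0 < α * y := mul_pos hα0 hy.1
  have h4 : (α * y) * (1 - α * y) ≤ 1 := by nlinarith
  have h5 : α * (1 + (1 - α) * y) ≤ 1 := by nlinarith
  calc α ^ 2 * (y * (1 - α * y) * (1 + (1 - α) * y))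
      = ((α * y) * (1 - α * y)) * (α * (1 + (1 - α) * y)) := by ring
    _ ≤ 1 * 1 := mul_le_mul h4 h5 (by positivity) zero_le_one
    _ = 1 := one_mul 1

lemma monotoneOn_chemPot_sub {α : ℝ} (hα0 : 0 < α) (hα1 : α < 1) :
    MonotoneOn (fun y => chemPot α y - α ^ 2 * y) (Set.Ioo 0 (1 / α)) := by
  have hd : ∀ y ∈ Set.Ioo 0 (1 / α), HasDerivAt (fun y => chemPot α y - α ^ 2 * y)
      (1 / (y * (1 - α * y) * (1 + (1 - α) * y)) - α ^ 2) y := fun y hy => by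
    simpa using (hasDerivAt_chemPot hα0 hα1 hy).fun_sub ((hasDerivAt_id' y).const_mul (α ^ 2))
  refine monotoneOn_of_deriv_nonneg (convex_Ioo _ _)
    (fun y hy => (hd y hy).continuousAt.continuousWithinAt)
    (fun y hy => (hd y (interior_subset hy)).differentiableAt.differentiableWithinAt)
    (fun y hy => ?_)
  rw [(hd y (interior_subset hy)).deriv]
  exact sub_nonneg.2 (sq_le_deriv_chemPot hα0 hα1 (interior_subset hy))

lemma sq_le_chemPot_sub_mul_sub {α x y : ℝ} (hα0 : 0 < α) (hα1 : α < 1)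
    (hx : x ∈ Set.Ioo 0 (1 / α)) (hy : y ∈ Set.Ioo 0 (1 / α)) :
    α ^ 2 * (x - y) ^ 2 ≤ (chemPot α x - chemPot α y) * (x - y) := by
  rcases le_total x y with h | h
  · have := monotoneOn_chemPot_sub hα0 hα1 hx hy h
    simp only at this
    nlinarith
  · have := monotoneOn_chemPot_sub hα0 hα1 hy hx h
    simp only at this
    nlinarith

lemma sq_le_muF_sub_tangent {α x y : ℝ} (hα0 : 0 < α) (hα1 : α < 1)
    (hx : x ∈ Set.Ioo 0 (1 / α)) (hy : y ∈ Set.Ioo 0 (1 / α)) :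
    α ^ 2 / 2 * (y - x) ^ 2 ≤ muF α y - muF α x - chemPot α x * (y - x) := by
  have hd : ∀ y ∈ Set.Ioo 0 (1 / α), HasDerivAt (fun y => muF α y - α ^ 2 / 2 * y ^ 2)
      (chemPot α y - α ^ 2 * y) y := fun y hy => by
    refine ((hasDerivAt_muF hα0 hα1 hy).fun_sub
      ((hasDerivAt_pow 2 y).const_mul (α ^ 2 / 2))).congr_deriv ?_
    push_cast
    ring
  have hconv : ConvexOn ℝ (Set.Ioo 0 (1 / α)) (fun y => muF α y - α ^ 2 / 2 * y ^ 2) := by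
    refine MonotoneOn.convexOn_of_deriv (convex_Ioo _ _)
      (fun y hy => (hd y hy).continuousAt.continuousWithinAt)
      (fun y hy => (hd y (interior_subset hy)).differentiableAt.differentiableWithinAt) ?_
    rw [interior_Ioo]
    exact (monotoneOn_chemPot_sub hα0 hα1).congr fun y hy => (hd y hy).deriv.symm
  rcases lt_trichotomy x y with h | rfl | h
  · have := hconv.le_slope_of_hasDerivAt hx hy h (hd x hx)
    rw [slope_def_field, le_div_iff₀ (sub_pos.2 h)] at this
    nlinarith
  · simp
  · have := hconv.slope_le_of_hasDerivAt hy hx h (hd x hx)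
    rw [slope_def_field, div_le_iff₀ (sub_pos.2 h)] at this
    nlinarith

lemma continuousAt_chemPot {α y : ℝ} (hα0 : 0 < α) (hα1 : α < 1)
    (hy : y ∈ Set.Ioo 0 (1 / α)) : ContinuousAt (chemPot α) y :=
  (hasDerivAt_chemPot hα0 hα1 hy).continuousAt

lemma sum_four_swap_pairs {N : ℕ} (f : Fin N → Fin N → Fin N → Fin N → ℝ) :
    ∑ i, ∑ j, ∑ k, ∑ l, f i j k l = ∑ i, ∑ j, ∑ k, ∑ l, f k l i j := by
  have := Finset.sum_comm (s := Finset.univ) (t := Finset.univ)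
    (f := fun x y : Fin N × Fin N => f x.1 x.2 y.1 y.2)
  simpa only [Fintype.sum_prod_type] using this

/-- Weak form of a sum with the symmetries of a binary collision term. -/
lemma four_mul_sum_of_symm {N : ℕ} (φ : Fin N → ℝ) (G : Fin N → Fin N → Fin N → Fin N → ℝ)
    (h1 : ∀ i j k l, G j i k l = G i j k l) (h2 : ∀ i j k l, G k l i j = -G i j k l) :
    4 * ∑ i, ∑ j, ∑ k, ∑ l, φ i * G i j k l
      = ∑ i, ∑ j, ∑ k, ∑ l, (φ i + φ j - φ k - φ l) * G i j k l := by
  have ej : ∑ i, ∑ j, ∑ k, ∑ l, φ j * G i j k l = ∑ i, ∑ j, ∑ k, ∑ l, φ i * G i j k l := by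
    rw [Finset.sum_comm]
    exact Finset.sum_congr rfl fun i _ => Finset.sum_congr rfl fun j _ =>
      Finset.sum_congr rfl fun k _ => Finset.sum_congr rfl fun l _ => by rw [h1 i j k l]
  have ek : ∑ i, ∑ j, ∑ k, ∑ l, φ k * G i j k l = -∑ i, ∑ j, ∑ k, ∑ l, φ i * G i j k l := by
    rw [sum_four_swap_pairs]
    simp only [← Finset.sum_neg_distrib]
    exact Finset.sum_congr rfl fun i _ => Finset.sum_congr rfl fun j _ =>
      Finset.sum_congr rfl fun k _ => Finset.sum_congr rfl fun l _ => by
        rw [h2 i j k l, mul_neg]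
  have el : ∑ i, ∑ j, ∑ k, ∑ l, φ l * G i j k l = -∑ i, ∑ j, ∑ k, ∑ l, φ i * G i j k l := by
    rw [sum_four_swap_pairs, ← ej]
    simp only [← Finset.sum_neg_distrib]
    exact Finset.sum_congr rfl fun i _ => Finset.sum_congr rfl fun j _ =>
      Finset.sum_congr rfl fun k _ => Finset.sum_congr rfl fun l _ => by
        rw [h2 i j k l, mul_neg]
  simp only [sub_mul, add_mul, Finset.sum_sub_distrib, Finset.sum_add_distrib]
  rw [ej, ek, el]
  ring

lemma four_mul_dotN_Qop {N d : ℕ} {p : Fin N → Fin d → ℝ}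
    {Γ : Fin N → Fin N → Fin N → Fin N → ℝ} (hΓ : GammaOK p Γ) (α : ℝ) (φ f : Fin N → ℝ) :
    4 * dotN φ (Qop α Γ f) = ∑ i, ∑ j, ∑ k, ∑ l, (φ i + φ j - φ k - φ l) * (Γ i j k l *
      (f k * f l * Psi α (f i) * Psi α (f j) - f i * f j * Psi α (f k) * Psi α (f l))) := by
  obtain ⟨-, hs, ht, -⟩ := hΓ
  rw [← four_mul_sum_of_symm]
  · simp only [dotN, Qop, Finset.mul_sum]
  · intro i j k l
    rw [hs j i k l]
    ring
  · intro i j k l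
    rw [ht k l i j]
    ring

lemma dotN_Qop_eq_zero {N d : ℕ} {p : Fin N → Fin d → ℝ}
    {Γ : Fin N → Fin N → Fin N → Fin N → ℝ} (hΓ : GammaOK p Γ) (α : ℝ) {φ : Fin N → ℝ}
    (hφ : IsCollInv Γ φ) (f : Fin N → ℝ) : dotN φ (Qop α Γ f) = 0 := by
  have h := four_mul_dotN_Qop hΓ α φ f
  rw [Finset.sum_eq_zero] at h
  · linarith
  refine fun i _ => Finset.sum_eq_zero fun j _ => Finset.sum_eq_zero fun k _ =>
    Finset.sum_eq_zero fun l _ => ?_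
  by_cases hg : Γ i j k l = 0
  · simp [hg]
  · have := hφ i j k l hg
    rw [show φ i + φ j - φ k - φ l = 0 by linarith, zero_mul]

lemma entropy_term_eq {N : ℕ} {α : ℝ} (hα0 : 0 < α) (hα1 : α < 1) {f : Fin N → ℝ}
    (hf : ∀ i, f i ∈ Set.Ioo 0 (1 / α)) (i j k l : Fin N) :
    f k * f l * Psi α (f i) * Psi α (f j) - f i * f j * Psi α (f k) * Psi α (f l)
      = Psi α (f i) * Psi α (f j) * Psi α (f k) * Psi α (f l) *
        (Real.exp (chemPot α (f k) + chemPot α (f l))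
          - Real.exp (chemPot α (f i) + chemPot α (f j))) := by
  have h := fun i => (Psi_pos hα0 hα1 (hf i)).ne'
  have := h i
  have := h j
  have := h k
  have := h l
  simp only [Real.exp_add, exp_chemPot hα0 hα1 (hf _)]
  field_simp

lemma sub_mul_exp_sub_nonpos (x y : ℝ) : (x - y) * (Real.exp y - Real.exp x) ≤ 0 := by
  rcases le_total x y with h | h
  · exact mul_nonpos_of_nonpos_of_nonneg (by linarith) (by linarith [Real.exp_le_exp.2 h])
  · exact mul_nonpos_of_nonneg_of_nonpos (by linarith) (by linarith [Real.exp_le_exp.2 h])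

lemma entropy_term_nonpos {N d : ℕ} {p : Fin N → Fin d → ℝ}
    {Γ : Fin N → Fin N → Fin N → Fin N → ℝ} (hΓ : GammaOK p Γ) {α : ℝ} (hα0 : 0 < α)
    (hα1 : α < 1) {f : Fin N → ℝ} (hf : ∀ i, f i ∈ Set.Ioo 0 (1 / α)) (i j k l : Fin N) :
    (chemPot α (f i) + chemPot α (f j) - chemPot α (f k) - chemPot α (f l)) * (Γ i j k l *
      (f k * f l * Psi α (f i) * Psi α (f j) - f i * f j * Psi α (f k) * Psi α (f l))) ≤ 0 := by
  have h := fun i => Psi_pos hα0 hα1 (hf i)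
  have hP := mul_pos (mul_pos (mul_pos (h i) (h j)) (h k)) (h l)
  have hx := mul_nonpos_of_nonneg_of_nonpos (mul_nonneg (hΓ.1 i j k l) hP.le)
    (sub_mul_exp_sub_nonpos (chemPot α (f i) + chemPot α (f j))
      (chemPot α (f k) + chemPot α (f l)))
  rw [entropy_term_eq hα0 hα1 hf]
  linarith

/-- The entropy production has a sign. -/
lemma dotN_chemPot_Qop_nonpos {N d : ℕ} {p : Fin N → Fin d → ℝ}
    {Γ : Fin N → Fin N → Fin N → Fin N → ℝ} (hΓ : GammaOK p Γ) {α : ℝ} (hα0 : 0 < α)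
    (hα1 : α < 1) {f : Fin N → ℝ} (hf : ∀ i, f i ∈ Set.Ioo 0 (1 / α)) :
    dotN (fun i => chemPot α (f i)) (Qop α Γ f) ≤ 0 := by
  have h := four_mul_dotN_Qop hΓ α (fun i => chemPot α (f i)) f
  have : 4 * dotN (fun i => chemPot α (f i)) (Qop α Γ f) ≤ 0 := by
    rw [h]
    exact Finset.sum_nonpos fun i _ => Finset.sum_nonpos fun j _ => Finset.sum_nonpos fun k _ =>
      Finset.sum_nonpos fun l _ => entropy_term_nonpos hΓ hα0 hα1 hf i j k l
  linarith

/-- Vanishing entropy production forces the chemical potential to be a collision invariant. -/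
lemma isCollInv_chemPot {N d : ℕ} {p : Fin N → Fin d → ℝ}
    {Γ : Fin N → Fin N → Fin N → Fin N → ℝ} (hΓ : GammaOK p Γ) {α : ℝ} (hα0 : 0 < α)
    (hα1 : α < 1) {f : Fin N → ℝ} (hf : ∀ i, f i ∈ Set.Ioo 0 (1 / α))
    (h0 : dotN (fun i => chemPot α (f i)) (Qop α Γ f) = 0) :
    IsCollInv Γ (fun i => chemPot α (f i)) := by
  intro i j k l hg
  have h := four_mul_dotN_Qop hΓ α (fun i => chemPot α (f i)) f
  rw [h0, mul_zero] at h
  have ht := entropy_term_nonpos hΓ hα0 hα1 hf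
  have h1 := (Finset.sum_eq_zero_iff_of_nonpos fun i _ => Finset.sum_nonpos fun j _ =>
    Finset.sum_nonpos fun k _ => Finset.sum_nonpos fun l _ => ht i j k l).1 h.symm
    i (Finset.mem_univ i)
  have h2 := (Finset.sum_eq_zero_iff_of_nonpos fun j _ =>
    Finset.sum_nonpos fun k _ => Finset.sum_nonpos fun l _ => ht i j k l).1 h1
    j (Finset.mem_univ j)
  have h3 := (Finset.sum_eq_zero_iff_of_nonpos fun k _ =>
    Finset.sum_nonpos fun l _ => ht i j k l).1 h2 k (Finset.mem_univ k)
  have h4 := (Finset.sum_eq_zero_iff_of_nonpos fun l _ => ht i j k l).1 h3 l (Finset.mem_univ l)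
  have hp := fun i => (Psi_pos hα0 hα1 (hf i)).ne'
  rw [entropy_term_eq hα0 hα1 hf] at h4
  simp only [mul_eq_zero, hg, hp, false_or, sub_eq_zero, Real.exp_eq_exp] at h4
  rcases h4 with h4 | h4
  · linarith
  · exact h4.symm

lemma isCollInv_one {N : ℕ} (Γ : Fin N → Fin N → Fin N → Fin N → ℝ) :
    IsCollInv Γ (fun _ => 1) := fun _ _ _ _ _ => rfl

lemma isCollInv_momentum {N d : ℕ} {p : Fin N → Fin d → ℝ}
    {Γ : Fin N → Fin N → Fin N → Fin N → ℝ} (hΓ : GammaOK p Γ) (m : Fin d) :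
    IsCollInv Γ (fun i => p i m) := fun i j k l h => (hΓ.2.2.2 i j k l h).1 m

lemma isCollInv_energy {N d : ℕ} {p : Fin N → Fin d → ℝ}
    {Γ : Fin N → Fin N → Fin N → Fin N → ℝ} (hΓ : GammaOK p Γ) :
    IsCollInv Γ (fun i => ∑ m, (p i m) ^ 2) := fun i j k l h => (hΓ.2.2.2 i j k l h).2

lemma chemPot_of_isEquilib {N d : ℕ} {α : ℝ} (hα0 : 0 < α) (hα1 : α < 1)
    {p : Fin N → Fin d → ℝ} {P : Fin N → ℝ} (hP : IsEquilib α p P) :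
    ∃ (a : ℝ) (b : Fin d → ℝ) (c : ℝ), ∀ i,
      chemPot α (P i) = a + (∑ m, b m * p i m) + c * ∑ m, (p i m) ^ 2 := by
  obtain ⟨hr, K, b, c, hK, h⟩ := hP
  refine ⟨Real.log K, fun m => -b m, -c, fun i => Real.exp_injective ?_⟩
  rw [exp_chemPot hα0 hα1 (hr i), h i, add_assoc, Real.exp_add, Real.exp_log hK]
  simp only [neg_mul, Finset.sum_neg_distrib, sub_eq_add_neg]

lemma isEquilib_of_isCollInv {N d : ℕ} {α : ℝ} (hα0 : 0 < α) (hα1 : α < 1)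
    {p : Fin N → Fin d → ℝ} {Γ : Fin N → Fin N → Fin N → Fin N → ℝ} (hnorm : IsNormal p Γ)
    {P : Fin N → ℝ} (hP : ∀ i, P i ∈ Set.Ioo 0 (1 / α))
    (h : IsCollInv Γ (fun i => chemPot α (P i))) : IsEquilib α p P := by
  obtain ⟨a, c, b, hφ⟩ := hnorm _ h
  refine ⟨hP, Real.exp a, fun m => -b m, -c, Real.exp_pos a, fun i => ?_⟩
  rw [← exp_chemPot hα0 hα1 (hP i), hφ i, ← Real.exp_add]
  simp only [neg_mul, Finset.sum_neg_distrib]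
  congr 1
  ring

lemma dotN_affine {N d : ℕ} (p : Fin N → Fin d → ℝ) (a c : ℝ) (b : Fin d → ℝ)
    (f : Fin N → ℝ) :
    dotN (fun i => a + (∑ m, b m * p i m) + c * ∑ m, (p i m) ^ 2) f
      = a * dotN (fun _ => 1) f + (∑ m, b m * dotN (fun i => p i m) f)
        + c * dotN (fun i => ∑ m, (p i m) ^ 2) f := by
  simp only [dotN, add_mul, Finset.sum_add_distrib, Finset.mul_sum, Finset.sum_mul, one_mul]
  congr 1
  · congr 1
    rw [Finset.sum_comm]
    simp only [mul_assoc]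
  · simp only [mul_assoc]

/-- An equilibrium is determined by its moments. -/
lemma isEquilib_unique {N d : ℕ} {α : ℝ} (hα0 : 0 < α) (hα1 : α < 1)
    {p : Fin N → Fin d → ℝ} {P P' : Fin N → ℝ} (hP : IsEquilib α p P) (hP' : IsEquilib α p P')
    (h0 : dotN (fun _ => 1) P' = dotN (fun _ => 1) P)
    (h1 : ∀ m, dotN (fun i => p i m) P' = dotN (fun i => p i m) P)
    (h2 : dotN (fun i => ∑ m, (p i m) ^ 2) P' = dotN (fun i => ∑ m, (p i m) ^ 2) P) :
    P' = P := by
  have key : ∀ R, IsEquilib α p R →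
      ∑ i, chemPot α (R i) * P' i = ∑ i, chemPot α (R i) * P i := by
    intro R hR
    obtain ⟨a, b, c, h⟩ := chemPot_of_isEquilib hα0 hα1 hR
    have := dotN_affine p a c b P'
    rw [h0, h2] at this
    simp only [h1] at this
    rw [← dotN_affine] at this
    simpa only [dotN, h] using this
  have hsum : ∑ i, (chemPot α (P' i) - chemPot α (P i)) * (P' i - P i) = 0 := by
    have e1 := key P hP
    have e2 := key P' hP'
    simp only [sub_mul, mul_sub, Finset.sum_sub_distrib]
    linarith
  have hle := fun i => sq_le_chemPot_sub_mul_sub hα0 hα1 (hP'.1 i) (hP.1 i)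
  have hz := (Finset.sum_eq_zero_iff_of_nonneg fun i _ =>
    (by positivity : (0 : ℝ) ≤ α ^ 2 * (P' i - P i) ^ 2).trans (hle i)).1 hsum
  funext i
  have h3 := hle i
  rw [hz i (Finset.mem_univ i)] at h3
  have h4 : (P' i - P i) ^ 2 ≤ 0 := nonpos_of_mul_nonpos_right h3 (by positivity)
  exact sub_eq_zero.1 (pow_eq_zero_iff two_ne_zero |>.1 (le_antisymm h4 (sq_nonneg _)))

lemma continuous_Qop {N : ℕ} {α : ℝ} (hα0 : 0 < α) (hα1 : α < 1)
    (Γ : Fin N → Fin N → Fin N → Fin N → ℝ) (i : Fin N) :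
    Continuous fun f : Fin N → ℝ => Qop α Γ f i := by
  have := continuous_Psi hα0 hα1
  unfold Qop
  fun_prop

lemma continuousAt_entropyProduction {N : ℕ} {α : ℝ} (hα0 : 0 < α) (hα1 : α < 1)
    (Γ : Fin N → Fin N → Fin N → Fin N → ℝ) {f : Fin N → ℝ}
    (hf : ∀ i, f i ∈ Set.Ioo 0 (1 / α)) :
    ContinuousAt (fun f : Fin N → ℝ => dotN (fun i => chemPot α (f i)) (Qop α Γ f)) f :=
  tendsto_finsetSum _ fun i _ =>
    ((continuousAt_chemPot hα0 hα1 (hf i)).comp' (f := fun f : Fin N → ℝ => f i)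
      (continuous_apply i).continuousAt).mul
      (continuous_Qop hα0 hα1 Γ i).continuousAt

lemma continuousAt_entropy {N : ℕ} {α : ℝ} (hα0 : 0 < α) (hα1 : α < 1) {f : Fin N → ℝ}
    (hf : ∀ i, f i ∈ Set.Ioo 0 (1 / α)) :
    ContinuousAt (fun f : Fin N → ℝ => ∑ i, muF α (f i)) f :=
  tendsto_finsetSum _ fun i _ =>
    (hasDerivAt_muF hα0 hα1 (hf i)).continuousAt.comp' (f := fun f : Fin N → ℝ => f i)
      (continuous_apply i).continuousAt

/-- A nonincreasing function, bounded below, has a derivative tending to zero along a sequence. -/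
lemma exists_seq_deriv_tendsto_zero {h h' : ℝ → ℝ} {T B : ℝ}
    (hd : ∀ t, T ≤ t → HasDerivAt h (h' t) t) (hanti : AntitoneOn h (Set.Ici T))
    (hB : ∀ t, T ≤ t → B ≤ h t) :
    ∃ s : ℕ → ℝ, (∀ n : ℕ, T + n ≤ s n) ∧ Tendsto (fun n => h' (s n)) atTop (nhds 0) := by
  have hex : ∀ n : ℕ, ∃ c ∈ Set.Ioo (T + n) (T + (n + 1 : ℕ)),
      h' c = h (T + (n + 1 : ℕ)) - h (T + n) := by
    intro n
    have hn : (0 : ℝ) ≤ n := n.cast_nonneg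
    obtain ⟨c, hc, e⟩ := exists_hasDerivAt_eq_slope h h'
      (show T + (n : ℝ) < T + (n + 1 : ℕ) by push_cast; linarith)
      (fun t ht => (hd t (by linarith [ht.1])).continuousAt.continuousWithinAt)
      (fun t ht => hd t (by linarith [ht.1]))
    refine ⟨c, hc, ?_⟩
    rw [e, show T + ((n + 1 : ℕ) : ℝ) - (T + n) = 1 by push_cast; ring, div_one]
  choose s hs he using hex
  refine ⟨s, fun n => (hs n).1.le, ?_⟩
  have hseq : Antitone fun n : ℕ => h (T + n) := fun m n hmn =>
    hanti (by simp) (by simp) (by simpa using hmn)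
  have hlim := tendsto_atTop_ciInf hseq
    ⟨B, by rintro _ ⟨n, rfl⟩; exact hB _ (by simp)⟩
  have := ((tendsto_add_atTop_iff_nat 1).2 hlim).sub hlim
  simpa only [he, sub_self] using this

/-- A nonincreasing function which tends to zero along an unbounded sequence tends to zero. -/
lemma tendsto_zero_of_antitoneOn {V : ℝ → ℝ} {T : ℝ} (hanti : AntitoneOn V (Set.Ici T))
    (hnn : ∀ t, T ≤ t → 0 ≤ V t) {s : ℕ → ℝ} (hsT : ∀ n, T ≤ s n)
    (hs : Tendsto (fun n => V (s n)) atTop (nhds 0)) : Tendsto V atTop (nhds 0) := by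
  rw [Metric.tendsto_atTop]
  intro ε hε
  obtain ⟨n, hn⟩ := (hs.eventually (gt_mem_nhds hε)).exists
  refine ⟨s n, fun t ht => ?_⟩
  have hT := (hsT n).trans ht
  rw [Real.dist_eq, sub_zero, abs_of_nonneg (hnn t hT)]
  exact (hanti (hsT n) hT ht).trans_lt hn

/-- Convergence to an equilibrium with the same moments, for a trajectory inside the box. -/
lemma exists_tendsto_equilib {N d : ℕ} {α : ℝ} (hα0 : 0 < α) (hα1 : α < 1)
    {p : Fin N → Fin d → ℝ} {Γ : Fin N → Fin N → Fin N → Fin N → ℝ}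
    (hΓ : GammaOK p Γ) (hnorm : IsNormal p Γ) {f : ℝ → Fin N → ℝ} {η T : ℝ} (hη : 0 < η)
    (hd : ∀ t, T ≤ t → ∀ i, HasDerivAt (fun t => f t i) (Qop α Γ (f t) i) t)
    (hbound : ∀ t, T ≤ t → ∀ i, f t i ∈ Set.Icc η (1 / α - η))
    (hcons : ∀ φ, IsCollInv Γ φ → ∀ t, T ≤ t → dotN φ (f t) = dotN φ (f T)) :
    ∃ P : Fin N → ℝ, Tendsto f atTop (nhds P) ∧ IsEquilib α p P := by
  have hbox : ∀ {y : ℝ}, y ∈ Set.Icc η (1 / α - η) → y ∈ Set.Ioo 0 (1 / α) := fun hy =>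
    ⟨hη.trans_le hy.1, by linarith [hy.2]⟩
  have hH : ∀ t, T ≤ t → HasDerivAt (fun t => ∑ i, muF α (f t i))
      (dotN (fun i => chemPot α (f t i)) (Qop α Γ (f t))) t := fun t ht =>
    HasDerivAt.fun_sum fun i _ =>
      (hasDerivAt_muF hα0 hα1 (hbox (hbound t ht i))).comp (h := fun t => f t i) t (hd t ht i)
  have hanti : AntitoneOn (fun t => ∑ i, muF α (f t i)) (Set.Ici T) := by
    refine antitoneOn_of_deriv_nonpos (convex_Ici T)
      (fun t ht => (hH t ht).continuousAt.continuousWithinAt)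
      (fun t ht => (hH t (interior_subset ht)).differentiableAt.differentiableWithinAt)
      (fun t ht => ?_)
    rw [(hH t (interior_subset ht)).deriv]
    exact dotN_chemPot_Qop_nonpos hΓ hα0 hα1 fun i => hbox (hbound t (interior_subset ht) i)
  have hK : IsCompact (Set.univ.pi fun _ : Fin N => Set.Icc η (1 / α - η)) :=
    isCompact_univ_pi fun _ => isCompact_Icc
  obtain ⟨B, hB⟩ := hK.bddBelow_image (f := fun x : Fin N → ℝ => ∑ i, muF α (x i)) fun x hx =>
    (continuousAt_entropy hα0 hα1 fun i => hbox (hx i trivial)).continuousWithinAt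
  obtain ⟨s, hs, hs0⟩ := exists_seq_deriv_tendsto_zero hH hanti
    (B := B) (fun t ht => hB ⟨f t, fun i _ => hbound t ht i, rfl⟩)
  have hsT : ∀ n, T ≤ s n := fun n => le_trans (by simp) (hs n)
  obtain ⟨P, hPK, θ, hθ, hlim⟩ := hK.tendsto_subseq (x := fun n => f (s n))
    fun n i _ => hbound _ (hsT n) i
  have hP : ∀ i, P i ∈ Set.Ioo 0 (1 / α) := fun i => hbox (hPK i trivial)
  have hcoll : IsCollInv Γ (fun i => chemPot α (P i)) :=
    isCollInv_chemPot hΓ hα0 hα1 hP <| tendsto_nhds_unique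
      ((continuousAt_entropyProduction hα0 hα1 Γ hP).tendsto.comp hlim)
      (hs0.comp hθ.tendsto_atTop)
  refine ⟨P, ?_, isEquilib_of_isCollInv hα0 hα1 hnorm hP hcoll⟩
  have hPm : dotN (fun i => chemPot α (P i)) P = dotN (fun i => chemPot α (P i)) (f T) := by
    have hc : Continuous fun x : Fin N → ℝ => dotN (fun i => chemPot α (P i)) x := by
      unfold dotN
      fun_prop
    refine tendsto_nhds_unique ((hc.tendsto P).comp hlim) ?_
    exact tendsto_const_nhds.congr fun n => (hcons _ hcoll _ (hsT (θ n))).symm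
  have hV : ∀ t, T ≤ t → ∑ i, α ^ 2 / 2 * (f t i - P i) ^ 2
      ≤ ∑ i, muF α (f t i) - ∑ i, muF α (P i) := by
    intro t ht
    refine (Finset.sum_le_sum fun i _ =>
      sq_le_muF_sub_tangent hα0 hα1 (hP i) (hbox (hbound t ht i))).trans_eq ?_
    have := (hcons _ hcoll t ht).trans hPm.symm
    simp only [dotN] at this
    simp only [mul_sub, Finset.sum_sub_distrib]
    linarith
  have hV0 : Tendsto (fun t => ∑ i, muF α (f t i) - ∑ i, muF α (P i)) atTop (nhds 0) := by
    refine tendsto_zero_of_antitoneOn (T := T) (s := fun n => s (θ n))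
      (fun a ha b hb hab => sub_le_sub_right (hanti ha hb hab) _)
      (fun t ht => (Finset.sum_nonneg fun i _ => by positivity).trans (hV t ht))
      (fun n => hsT _) ?_
    have := ((continuousAt_entropy hα0 hα1 hP).tendsto.comp hlim).sub_const
      (∑ i, muF α (P i))
    simpa only [sub_self, Function.comp_def] using this
  refine tendsto_pi_nhds.2 fun i => ?_
  have hsq : Tendsto (fun t => α ^ 2 / 2 * (f t i - P i) ^ 2) atTop (nhds 0) := by
    refine squeeze_zero' (Eventually.of_forall fun t => by positivity) ?_ hV0
    filter_upwards [eventually_ge_atTop T] with t ht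
    exact (Finset.single_le_sum (f := fun i => α ^ 2 / 2 * (f t i - P i) ^ 2)
      (fun j _ => by positivity) (Finset.mem_univ i)).trans (hV t ht)
  have hsq' : Tendsto (fun t => (f t i - P i) ^ 2) atTop (nhds 0) := by
    have := hsq.const_mul (α ^ 2 / 2)⁻¹
    rw [mul_zero] at this
    exact this.congr fun t => inv_mul_cancel_left₀ (by positivity) _
  have habs : Tendsto (fun t => |f t i - P i|) atTop (nhds 0) := by
    simpa only [Real.sqrt_sq_eq_abs, Real.sqrt_zero] using hsq'.sqrt
  exact tendsto_sub_nhds_zero_iff.1 ((tendsto_zero_iff_abs_tendsto_zero _).2 habs)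

/-- Theorem 8: trend to equilibrium for the spatially homogeneous
system. -/
theorem stmt13 {N d : ℕ} (hN : 0 < N) (hd : 0 < d)
    (α : ℝ) (hα0 : 0 < α) (hα1 : α < 1)
    (p : Fin N → Fin d → ℝ) (Γ : Fin N → Fin N → Fin N → Fin N → ℝ)
    (hΓ : GammaOK p Γ) (hnorm : IsNormal p Γ)
    (F F' : ℝ → EuclideanSpace ℝ (Fin N))
    (hdiff : ∀ t ∈ Set.Ici (0 : ℝ), HasDerivWithinAt F (F' t) (Set.Ici 0) t)
    (hbdd : ∃ C : ℝ, ∀ t ∈ Set.Ici (0 : ℝ), ‖F t‖ ≤ C)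
    (heq : ∀ t ∈ Set.Ioi (0 : ℝ), ∀ i, F' t i = Qop α Γ (F t) i)
    (η t₀ : ℝ) (hη : 0 < η) (ht₀ : 0 ≤ t₀)
    (hbound : ∀ t, t₀ ≤ t → ∀ i, η ≤ F t i ∧ F t i ≤ 1 / α - η) :
    ∃ P : EuclideanSpace ℝ (Fin N),
      Filter.Tendsto F Filter.atTop (nhds P) ∧
      IsEquilib α p P ∧
      (∀ t, (0 : ℝ) ≤ t →
        dotN (fun _ => 1) P = dotN (fun _ => 1) (F t) ∧
        (∀ m : Fin d, dotN (fun i => p i m) P = dotN (fun i => p i m) (F t)) ∧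
        dotN (fun i => ∑ m, (p i m) ^ 2) P
          = dotN (fun i => ∑ m, (p i m) ^ 2) (F t)) ∧
      (∀ P' : EuclideanSpace ℝ (Fin N), IsEquilib α p P' →
        dotN (fun _ => 1) P' = dotN (fun _ => 1) P →
        (∀ m : Fin d, dotN (fun i => p i m) P' = dotN (fun i => p i m) P) →
        dotN (fun i => ∑ m, (p i m) ^ 2) P' = dotN (fun i => ∑ m, (p i m) ^ 2) P →
        P' = P) := by
  have hcont : ∀ i, ContinuousOn (fun t => F t i) (Set.Ici 0) := fun i t ht =>
    ((EuclideanSpace.proj (𝕜 := ℝ) i).continuous.continuousAt.comp_continuousWithinAt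
      (hdiff t ht).continuousWithinAt)
  have hder : ∀ t, 0 < t → ∀ i, HasDerivAt (fun t => F t i) (Qop α Γ (F t) i) t := by
    intro t ht i
    have h := (hdiff t ht.le).hasDerivAt (Ici_mem_nhds ht)
    rw [← heq t ht i]
    exact (EuclideanSpace.proj (𝕜 := ℝ) i).hasFDerivAt.comp_hasDerivAt t h
  have hcons : ∀ φ, IsCollInv Γ φ → ∀ t, 0 ≤ t → dotN φ (F t) = dotN φ (F 0) := by
    intro φ hφ t ht
    have hdφ : ∀ s, 0 < s → HasDerivAt (fun s => dotN φ (F s)) 0 s := fun s hs => by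
      rw [← dotN_Qop_eq_zero hΓ α hφ (F s)]
      exact HasDerivAt.fun_sum fun i _ => (hder s hs i).const_mul (φ i)
    rcases ht.eq_or_lt with rfl | ht
    · rfl
    obtain ⟨c, hc, e⟩ := exists_hasDerivAt_eq_slope (fun s => dotN φ (F s)) (fun _ => 0) ht
      (continuousOn_finsetSum _ fun i _ =>
        continuousOn_const.mul ((hcont i).mono Set.Icc_subset_Ici_self))
      (fun s hs => hdφ s hs.1)
    rw [eq_comm, div_eq_zero_iff] at e
    rcases e with e | e <;> linarith
  obtain ⟨P, hlim, hP⟩ := exists_tendsto_equilib hα0 hα1 hΓ hnorm (f := fun t => ⇑(F t))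
    (T := t₀ + 1) hη (fun t ht => hder t (by linarith)) (fun t ht => hbound t (by linarith))
    (fun φ hφ t ht => (hcons φ hφ t (by linarith)).trans
      (hcons φ hφ (t₀ + 1) (by linarith)).symm)
  have hmom : ∀ φ, IsCollInv Γ φ → ∀ t, 0 ≤ t → dotN φ P = dotN φ (F t) := by
    intro φ hφ t ht
    have hc : Continuous fun x : Fin N → ℝ => dotN φ x := by
      unfold dotN
      fun_prop
    refine tendsto_nhds_unique ((hc.tendsto P).comp hlim) (tendsto_const_nhds.congr' ?_)
    filter_upwards [eventually_ge_atTop 0] with s hs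
    exact (hcons φ hφ t ht).trans (hcons φ hφ s hs).symm
  refine ⟨WithLp.toLp 2 P, ?_, hP, fun t ht => ⟨hmom _ (isCollInv_one Γ) t ht,
    fun m => hmom _ (isCollInv_momentum hΓ m) t ht, hmom _ (isCollInv_energy hΓ) t ht⟩,
    fun P' hP' h0 h1 h2 => ?_⟩
  · exact ((PiLp.continuous_toLp 2 fun _ : Fin N => ℝ).tendsto P).comp hlim
  · exact PiLp.ext fun i => congrFun (isEquilib_unique hα0 hα1 hP hP' h0 h1 h2) i
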